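/- arXiv:2105.12272 — 4 statements merged into one kernel-verified Lean document; each statement's English description precedes it below -/
import Mathlib

section
/- Off-policy representation bound, total-variation form: Under the same setup as the off-policy representation bound (finite MDP, target policy π*, offline distribution d^off with d^off(s) > 0 whenever d^{π*}(s) > 0, finite Z, φ : S → Z, R_Z : Z×A → [−R_max,R_max], P_Z(·|z,a) probability distributions with P_Z(s'|φ(s),a) > 0 whenever P(s'|s,a) > 0 and d^off(s) > 0, and ε = (|A|/(1−γ)) J_R + (2γ|A| R_max/(1−γ)²) J_T with J_R = √(∑_s d^off(s)(1/|A|)∑_a (R(s,a)−R_Z(φ(s),a))²) and J_T = √((1/2)∑_s d^off(s)(1/|A|)∑_a D_KL(P(·|s,a)‖P_Z(·|φ(s),a)))), for every latent policy π_Z assigning to each z∈Z a probability distribution π_Z(·|z) on A it holds that PerfDiff(π_Z∘φ, π*) ≤ (1 + D_χ²(d^{π*}‖d^off)^{1/2}) · ε + (2R_max/(1−γ)²) · ∑_{z∈Z} d^{π*}_Z(z) D_TV(π_{*,Z}(·|z) ‖ π_Z(·|z)). -/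
open Finset

noncomputable section

variable {S A Z : Type*}

/-- State distribution at time `t` when following policy `π` from initial distribution `μ`. -/
def stateDist [Fintype S] [Fintype A] (P : S → A → S → ℝ) (π : S → A → ℝ)
    (μ : S → ℝ) : ℕ → S → ℝ
  | 0 => μ
  | t + 1 => fun s' => ∑ s : S, ∑ a : A, π s a * P s a s' * stateDist P π μ t s

/-- Discounted visitation distribution `d^π`. -/
def visitation [Fintype S] [Fintype A] (P : S → A → S → ℝ) (π : S → A → ℝ)
    (μ : S → ℝ) (γ : ℝ) (s : S) : ℝ :=
  (1 - γ) * ∑' t : ℕ, γ ^ t * stateDist P π μ t s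

/-- Performance `J(π)`. -/
def perf [Fintype S] [Fintype A] (P : S → A → S → ℝ) (R : S → A → ℝ)
    (π : S → A → ℝ) (μ : S → ℝ) (γ : ℝ) : ℝ :=
  ∑' t : ℕ, γ ^ t * ∑ s : S, ∑ a : A, R s a * π s a * stateDist P π μ t s

/-- `PerfDiff(π, π')`. -/
def perfDiff [Fintype S] [Fintype A] (P : S → A → S → ℝ) (R : S → A → ℝ)
    (μ : S → ℝ) (γ : ℝ) (π π' : S → A → ℝ) : ℝ :=
  |perf P R π μ γ - perf P R π' μ γ|

/-- Total variation distance. -/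
def dTV {X : Type*} [Fintype X] (p q : X → ℝ) : ℝ :=
  (1 / 2) * ∑ x : X, |p x - q x|

/-- KL divergence. -/
def dKL {X : Type*} [Fintype X] (p q : X → ℝ) : ℝ :=
  ∑ x : X, p x * Real.log (p x / q x)

/-- Pearson chi-squared divergence (terms with `q x = 0` vanish by the `x / 0 = 0` convention). -/
def dChi2 {X : Type*} [Fintype X] (p q : X → ℝ) : ℝ :=
  ∑ x : X, (p x - q x) ^ 2 / q x

/-- `Err_ρ(π1, π2, F)` for a reward-like function `F`. -/
def errF [Fintype S] [Fintype A] (ρ : S → ℝ) (π1 π2 : S → A → ℝ) (F : S → A → ℝ) : ℝ :=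
  |∑ s : S, ρ s * ∑ a : A, (π1 s a - π2 s a) * F s a|

/-- `Err_ρ(π1, π2, G)` for a transition-like function `G`. -/
def errG [Fintype S] [Fintype A] (ρ : S → ℝ) (π1 π2 : S → A → ℝ) (G : S → A → S → ℝ) : ℝ :=
  ∑ s' : S, |∑ s : S, ρ s * ∑ a : A, (π1 s a - π2 s a) * G s a s'|

/-- Marginalization `ρ_Z` of a state distribution onto `Z` via `φ`. -/
def margDist [Fintype S] [DecidableEq Z] (φ : S → Z) (ρ : S → ℝ) (z : Z) : ℝ :=
  ∑ s : S, if φ s = z then ρ s else 0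

/-- Marginalization `π_Z` of a policy onto `Z` via `φ`, w.r.t. the state distribution `ρ`
(by the `x / 0 = 0` convention it takes a fixed arbitrary value when `ρ_Z(z) = 0`). -/
def margPolicy [Fintype S] [DecidableEq Z] (φ : S → Z) (ρ : S → ℝ) (π : S → A → ℝ)
    (z : Z) (a : A) : ℝ :=
  (∑ s : S, if φ s = z then ρ s * π s a else 0) / margDist φ ρ z

/-- Log-linear (softmax) policy `π_θ(a|z)`. -/
def softmaxPol {d : ℕ} [Fintype A] (θ : A → Fin d → ℝ) (z : Fin d → ℝ) (a : A) : ℝ :=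
  Real.exp (∑ i, θ a i * z i) / ∑ b : A, Real.exp (∑ i, θ b i * z i)

/-- Sum of absolute values of all partial derivatives of `L : ℝ^{d×|A|} → ℝ` at `θ`. -/
def gradL1 {d : ℕ} [Fintype A] [DecidableEq A] (L : (A → Fin d → ℝ) → ℝ)
    (θ : A → Fin d → ℝ) : ℝ :=
  ∑ a : A, ∑ i : Fin d, |fderiv ℝ L θ (Pi.single a (Pi.single i 1))|

/-!
Let `V` be the value function of the latent policy `π_Z ∘ φ` in the true MDP. By the performance
difference lemma, `(1 - γ) (J(π*) - J(π_Z ∘ φ))` is the average over `d^{π*}` of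
`∑ a, (π* - π_Z ∘ φ)(a|s) Q_V(s, a)`. Replacing `Q_V(s, a)` by the backup of the *same* `V`
through the latent model makes the integrand depend on the state only via `φ s`, so that `π*` may
be replaced by its marginalization, which yields the total-variation term. The replacement costs
`|R - R_Z| + 2 γ ‖V‖ D_TV(P, P_Z)`; its average over `d^{π*}` is transferred to `d^off` by the
Cauchy-Schwarz inequality (hence the `χ²` factor), and Pinsker's inequality turns total variation
into `D_KL`.
-/

open InformationTheory

section Pinsker

variable {X : Type*} [Fintype X] {p q : X → ℝ}

/- Dividing the target inequality `3 (t - 1)² ≤ 2 (t + 2) klFun t` by `2 t (t + 2)` isolates the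
logarithm, so that the difference of the two sides has a rational derivative. -/
lemma hasDerivAt_log_sub_div {t : ℝ} (ht : 0 < t) :
    HasDerivAt (fun x ↦ Real.log x - (x - 1) * (5 * x + 1) / (2 * x * (x + 2)))
      ((t - 1) ^ 3 / (t ^ 2 * (t + 2) ^ 2)) t := by
  have hnum : HasDerivAt (fun x : ℝ ↦ (x - 1) * (5 * x + 1))
      (1 * (5 * t + 1) + (t - 1) * (5 * 1)) t :=
    ((hasDerivAt_id t).sub_const 1).mul (((hasDerivAt_id t).const_mul 5).add_const 1)
  have hden : HasDerivAt (fun x : ℝ ↦ 2 * x * (x + 2)) (2 * 1 * (t + 2) + 2 * t * 1) t :=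
    ((hasDerivAt_id t).const_mul 2).mul ((hasDerivAt_id t).add_const 2)
  refine ((Real.hasDerivAt_log ht.ne').sub (hnum.div hden (by positivity))).congr_deriv ?_
  field_simp
  ring

lemma sub_one_mul_div_le_log {t : ℝ} (ht : 0 < t) :
    (t - 1) * (5 * t + 1) / (2 * t * (t + 2)) ≤ Real.log t := by
  have hmin := isMinOn_Ioi_of_deriv (a := 0) (b := 1)
    (hasDerivAt_log_sub_div one_pos).continuousAt
    (fun x hx ↦ (hasDerivAt_log_sub_div hx.1).differentiableAt.differentiableWithinAt)
    (fun x hx ↦ (hasDerivAt_log_sub_div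
      (one_pos.trans hx)).differentiableAt.differentiableWithinAt)
    (fun x hx ↦ by
      rw [(hasDerivAt_log_sub_div hx.1).deriv]
      exact div_nonpos_of_nonpos_of_nonneg
        (Odd.pow_nonpos (by decide) (sub_nonpos.2 hx.2.le)) (by positivity))
    (fun x hx ↦ by
      rw [(hasDerivAt_log_sub_div (one_pos.trans hx)).deriv]
      have : 0 ≤ x - 1 := sub_nonneg.2 (le_of_lt hx)
      positivity)
  have hle := isMinOn_iff.1 hmin t ht
  simp only [Real.log_one, sub_self, zero_mul, zero_div] at hle
  exact sub_nonneg.1 hle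

lemma three_mul_sub_one_sq_le_mul_klFun {t : ℝ} (ht : 0 ≤ t) :
    3 * (t - 1) ^ 2 ≤ 2 * (t + 2) * klFun t := by
  rcases ht.eq_or_lt with rfl | ht
  · norm_num [klFun_zero]
  · have hlog := sub_one_mul_div_le_log ht
    rw [div_le_iff₀ (by positivity)] at hlog
    rw [klFun_apply]
    linarith

lemma three_mul_sub_sq_le_mul_klFun_div {x y : ℝ} (hx : 0 ≤ x) (hy : 0 ≤ y)
    (hxy : y = 0 → x = 0) :
    3 * (x - y) ^ 2 ≤ 2 * (x + 2 * y) * (y * klFun (x / y)) := by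
  rcases hy.eq_or_lt with rfl | hy
  · simp [hxy rfl]
  · calc 3 * (x - y) ^ 2 = y ^ 2 * (3 * (x / y - 1) ^ 2) := by field_simp
      _ ≤ y ^ 2 * (2 * (x / y + 2) * klFun (x / y)) := mul_le_mul_of_nonneg_left
          (three_mul_sub_one_sq_le_mul_klFun (div_nonneg hx hy.le)) (sq_nonneg y)
      _ = 2 * (x + 2 * y) * (y * klFun (x / y)) := by field_simp

lemma dKL_eq_sum_mul_klFun (hsum : ∑ x, p x = ∑ x, q x) (hpq : ∀ x, q x = 0 → p x = 0) :
    dKL p q = ∑ x, q x * klFun (p x / q x) := by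
  have hterm (x : X) : q x * klFun (p x / q x) = p x * Real.log (p x / q x) + (q x - p x) := by
    rcases eq_or_ne (q x) 0 with hq | hq
    · simp [hq, hpq x hq]
    · rw [klFun_apply]
      field_simp
      ring
  simp only [hterm, sum_add_distrib, sum_sub_distrib, hsum, sub_self, add_zero, dKL]

lemma dTV_sq_le_half_dKL (hp : p ∈ stdSimplex ℝ X) (hq : q ∈ stdSimplex ℝ X)
    (hpq : ∀ x, q x = 0 → p x = 0) : dTV p q ^ 2 ≤ 1 / 2 * dKL p q := by
  have hcs : (∑ x, |p x - q x|) ^ 2 ≤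
      (∑ x, 2 / 3 * (p x + 2 * q x)) * ∑ x, q x * klFun (p x / q x) := by
    refine sum_sq_le_sum_mul_sum_of_sq_le_mul univ (fun x _ ↦ ?_) (fun x _ ↦ ?_) (fun x _ ↦ ?_)
    · linarith [hp.1 x, hq.1 x]
    · exact mul_nonneg (hq.1 x) (klFun_nonneg (div_nonneg (hp.1 x) (hq.1 x)))
    · rw [sq_abs]
      linarith [three_mul_sub_sq_le_mul_klFun_div (hp.1 x) (hq.1 x) (hpq x)]
  have hweight : ∑ x, 2 / 3 * (p x + 2 * q x) = 2 := by
    rw [← mul_sum, sum_add_distrib, ← mul_sum, hp.2, hq.2]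
    norm_num
  rw [hweight, ← dKL_eq_sum_mul_klFun (hp.2.trans hq.2.symm) hpq] at hcs
  rw [dTV, mul_pow]
  linarith

end Pinsker

section Averages

variable {X : Type*} [Fintype X] {p q f : X → ℝ} {C : ℝ}

lemma abs_sum_mul_le_of_mem_stdSimplex (hp : p ∈ stdSimplex ℝ X) (hf : ∀ x, |f x| ≤ C) :
    |∑ x, p x * f x| ≤ C :=
  calc |∑ x, p x * f x| ≤ ∑ x, |p x * f x| := abs_sum_le_sum_abs _ _
    _ ≤ ∑ x, p x * C := sum_le_sum fun x _ ↦ by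
        rw [abs_mul, abs_of_nonneg (hp.1 x)]
        exact mul_le_mul_of_nonneg_left (hf x) (hp.1 x)
    _ = C := by rw [← sum_mul, hp.2, one_mul]

lemma abs_sum_sub_mul_le_mul_dTV (p q : X → ℝ) (hf : ∀ x, |f x| ≤ C) :
    |∑ x, (p x - q x) * f x| ≤ 2 * C * dTV p q :=
  calc |∑ x, (p x - q x) * f x| ≤ ∑ x, |(p x - q x) * f x| := abs_sum_le_sum_abs _ _
    _ ≤ ∑ x, |p x - q x| * C := sum_le_sum fun x _ ↦ by
        rw [abs_mul]
        exact mul_le_mul_of_nonneg_left (hf x) (abs_nonneg _)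
    _ = 2 * C * dTV p q := by rw [← sum_mul, dTV]; ring

lemma abs_sum_sub_mul_le_sum_abs (hp : p ∈ stdSimplex ℝ X) (hq : q ∈ stdSimplex ℝ X) :
    |∑ x, (p x - q x) * f x| ≤ ∑ x, |f x| := by
  have hpq (x : X) : |p x - q x| ≤ 1 :=
    abs_sub_le_of_nonneg_of_le (hp.1 x) (mem_Icc_of_mem_stdSimplex hp x).2
      (hq.1 x) (mem_Icc_of_mem_stdSimplex hq x).2
  refine (abs_sum_le_sum_abs _ _).trans (sum_le_sum fun x _ ↦ ?_)
  rw [abs_mul]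
  exact mul_le_of_le_one_left (abs_nonneg _) (hpq x)

end Averages

section ChangeOfMeasure

variable {X : Type*} [Fintype X] {d ρ : X → ℝ}

lemma sum_mul_le_sqrt_sum_mul_sq (hρ : ρ ∈ stdSimplex ℝ X) (f : X → ℝ) :
    ∑ x, ρ x * f x ≤ √(∑ x, ρ x * f x ^ 2) :=
  Real.le_sqrt_of_sq_le <|
    Real.pow_arith_mean_le_arith_mean_pow_of_even univ ρ f (fun x _ ↦ hρ.1 x) hρ.2 even_two

lemma sum_sub_mul_le_sqrt_dChi2_mul_sqrt (hρ : ∀ x, 0 ≤ ρ x) (hd : ∀ x, ρ x = 0 → d x = 0)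
    (f : X → ℝ) :
    ∑ x, (d x - ρ x) * f x ≤ √(dChi2 d ρ) * √(∑ x, ρ x * f x ^ 2) := by
  have hchi (x : X) : 0 ≤ (d x - ρ x) ^ 2 / ρ x := div_nonneg (sq_nonneg _) (hρ x)
  rw [dChi2, ← Real.sqrt_mul (sum_nonneg fun x _ ↦ hchi x)]
  refine Real.le_sqrt_of_sq_le <| sum_sq_le_sum_mul_sum_of_sq_le_mul univ (fun x _ ↦ hchi x)
    (fun x _ ↦ mul_nonneg (hρ x) (sq_nonneg _)) fun x _ ↦ ?_
  rcases eq_or_ne (ρ x) 0 with h | h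
  · simp [h, hd x h]
  · field_simp
    rfl

lemma sum_mul_le_one_add_sqrt_dChi2_mul_sqrt (hρ : ρ ∈ stdSimplex ℝ X)
    (hd : ∀ x, ρ x = 0 → d x = 0) (f : X → ℝ) :
    ∑ x, d x * f x ≤ (1 + √(dChi2 d ρ)) * √(∑ x, ρ x * f x ^ 2) :=
  calc ∑ x, d x * f x = ∑ x, ρ x * f x + ∑ x, (d x - ρ x) * f x := by
        rw [← sum_add_distrib]
        exact sum_congr rfl fun x _ ↦ by ring
    _ ≤ √(∑ x, ρ x * f x ^ 2) + √(dChi2 d ρ) * √(∑ x, ρ x * f x ^ 2) :=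
        add_le_add (sum_mul_le_sqrt_sum_mul_sq hρ f)
          (sum_sub_mul_le_sqrt_dChi2_mul_sqrt hρ.1 hd f)
    _ = (1 + √(dChi2 d ρ)) * √(∑ x, ρ x * f x ^ 2) := by ring

lemma sq_sum_le_card_sq_mul_mean_sq [Fintype A] (f : A → ℝ) :
    (∑ a, f a) ^ 2 ≤ (Fintype.card A : ℝ) ^ 2 * (1 / Fintype.card A * ∑ a, f a ^ 2) := by
  rcases isEmpty_or_nonempty A with hA | hA
  · simp
  · refine (sq_sum_le_card_mul_sum_sq (s := univ) (f := f)).trans_eq ?_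
    rw [card_univ]
    field_simp

lemma sum_mul_sum_le_one_add_sqrt_dChi2_mul_card_mul_sqrt [Fintype A]
    (hρ : ρ ∈ stdSimplex ℝ X) (hd : ∀ x, ρ x = 0 → d x = 0) {f g : X → A → ℝ}
    (hfg : ∀ x, 0 < ρ x → ∀ a, f x a ^ 2 ≤ g x a) :
    ∑ x, d x * ∑ a, f x a ≤ (1 + √(dChi2 d ρ)) *
      (Fintype.card A * √(∑ x, ρ x * (1 / Fintype.card A * ∑ a, g x a))) := by
  have hsq : ∑ x, ρ x * (∑ a, f x a) ^ 2 ≤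
      (Fintype.card A : ℝ) ^ 2 * ∑ x, ρ x * (1 / Fintype.card A * ∑ a, g x a) := by
    rw [mul_sum]
    refine sum_le_sum fun x _ ↦ ?_
    rcases (hρ.1 x).eq_or_lt with hx | hx
    · simp [← hx]
    · rw [mul_left_comm]
      refine mul_le_mul_of_nonneg_left ((sq_sum_le_card_sq_mul_mean_sq _).trans ?_) hx.le
      gcongr with a
      exact hfg x hx a
  refine (sum_mul_le_one_add_sqrt_dChi2_mul_sqrt hρ hd _).trans ?_
  refine mul_le_mul_of_nonneg_left ((Real.sqrt_le_sqrt hsq).trans_eq ?_) (by positivity)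
  rw [Real.sqrt_mul (sq_nonneg _), Real.sqrt_sq (Nat.cast_nonneg _)]

end ChangeOfMeasure

section MDP

variable [Fintype S] [Fintype A] {P : S → A → S → ℝ} {R : S → A → ℝ} {μ : S → ℝ} {γ : ℝ}
  {π : S → A → ℝ}

lemma sum_stateDist_succ_mul (t : ℕ) (V : S → ℝ) :
    ∑ s', stateDist P π μ (t + 1) s' * V s' =
      ∑ s, stateDist P π μ t s * ∑ a, π s a * ∑ s', P s a s' * V s' := by
  simp only [stateDist, sum_mul, mul_sum]
  rw [sum_comm]
  refine sum_congr rfl fun s _ ↦ ?_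
  rw [sum_comm]
  exact sum_congr rfl fun a _ ↦ sum_congr rfl fun s' _ ↦ by ring

lemma stateDist_mem_stdSimplex (hP : ∀ s a, P s a ∈ stdSimplex ℝ S)
    (hπ : ∀ s, π s ∈ stdSimplex ℝ A) (hμ : μ ∈ stdSimplex ℝ S) (t : ℕ) :
    stateDist P π μ t ∈ stdSimplex ℝ S := by
  induction t with
  | zero => exact hμ
  | succ t ih =>
    refine ⟨fun s' ↦ sum_nonneg fun s _ ↦ sum_nonneg fun a _ ↦
      mul_nonneg (mul_nonneg ((hπ s).1 a) ((hP s a).1 s')) (ih.1 s), ?_⟩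
    simpa only [mul_one, (hP _ _).2, (hπ _).2, ih.2] using
      sum_stateDist_succ_mul (P := P) (π := π) (μ := μ) t fun _ ↦ 1

lemma visitation_nonneg (hP : ∀ s a, P s a ∈ stdSimplex ℝ S)
    (hπ : ∀ s, π s ∈ stdSimplex ℝ A) (hμ : μ ∈ stdSimplex ℝ S) (hγ0 : 0 ≤ γ) (hγ1 : γ ≤ 1)
    (s : S) : 0 ≤ visitation P π μ γ s :=
  mul_nonneg (sub_nonneg.2 hγ1) <| tsum_nonneg fun t ↦
    mul_nonneg (pow_nonneg hγ0 t) ((stateDist_mem_stdSimplex hP hπ hμ t).1 s)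

lemma summable_pow_mul_stateDist (hP : ∀ s a, P s a ∈ stdSimplex ℝ S)
    (hπ : ∀ s, π s ∈ stdSimplex ℝ A) (hμ : μ ∈ stdSimplex ℝ S) (hγ0 : 0 ≤ γ) (hγ1 : γ < 1)
    (s : S) : Summable fun t ↦ γ ^ t * stateDist P π μ t s := by
  have hmem (t : ℕ) := mem_Icc_of_mem_stdSimplex (stateDist_mem_stdSimplex hP hπ hμ t) s
  exact Summable.of_nonneg_of_le (fun t ↦ mul_nonneg (pow_nonneg hγ0 t) (hmem t).1)
    (fun t ↦ mul_le_of_le_one_right (pow_nonneg hγ0 t) (hmem t).2)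
    (summable_geometric_of_lt_one hγ0 hγ1)

lemma hasSum_pow_mul_sum_stateDist_mul (hP : ∀ s a, P s a ∈ stdSimplex ℝ S)
    (hπ : ∀ s, π s ∈ stdSimplex ℝ A) (hμ : μ ∈ stdSimplex ℝ S) (hγ0 : 0 ≤ γ) (hγ1 : γ < 1)
    (V : S → ℝ) :
    HasSum (fun t ↦ γ ^ t * ∑ s, stateDist P π μ t s * V s)
      ((∑ s, visitation P π μ γ s * V s) / (1 - γ)) := by
  have hγ : 1 - γ ≠ 0 := (sub_pos.2 hγ1).ne'
  convert! hasSum_sum (s := univ) fun s _ ↦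
    (summable_pow_mul_stateDist hP hπ hμ hγ0 hγ1 s).hasSum.mul_right (V s) using 1
  · simp only [mul_sum, mul_assoc]
  · simp only [visitation, mul_assoc, ← mul_sum]
    field_simp

lemma one_sub_mul_perf (hP : ∀ s a, P s a ∈ stdSimplex ℝ S)
    (hπ : ∀ s, π s ∈ stdSimplex ℝ A) (hμ : μ ∈ stdSimplex ℝ S) (hγ0 : 0 ≤ γ) (hγ1 : γ < 1) :
    (1 - γ) * perf P R π μ γ = ∑ s, visitation P π μ γ s * ∑ a, π s a * R s a := by
  have hγ : 1 - γ ≠ 0 := (sub_pos.2 hγ1).ne'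
  rw [← mul_div_cancel₀ (∑ s, visitation P π μ γ s * ∑ a, π s a * R s a) hγ,
    ← (hasSum_pow_mul_sum_stateDist_mul hP hπ hμ hγ0 hγ1 _).tsum_eq, perf]
  simp only [mul_sum, mul_comm, mul_left_comm]

lemma sum_visitation_mul (hP : ∀ s a, P s a ∈ stdSimplex ℝ S)
    (hπ : ∀ s, π s ∈ stdSimplex ℝ A) (hμ : μ ∈ stdSimplex ℝ S) (hγ0 : 0 ≤ γ) (hγ1 : γ < 1)
    (V : S → ℝ) :
    ∑ s, visitation P π μ γ s * V s = (1 - γ) * ∑ s, μ s * V s +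
      γ * ∑ s, visitation P π μ γ s * ∑ a, π s a * ∑ s', P s a s' * V s' := by
  have hγ : 1 - γ ≠ 0 := (sub_pos.2 hγ1).ne'
  have hV := hasSum_pow_mul_sum_stateDist_mul hP hπ hμ hγ0 hγ1 V
  have hPV := (hasSum_pow_mul_sum_stateDist_mul hP hπ hμ hγ0 hγ1
    fun s ↦ ∑ a, π s a * ∑ s', P s a s' * V s').mul_left γ
  have hstep (t : ℕ) : γ ^ (t + 1) * ∑ s, stateDist P π μ (t + 1) s * V s =
      γ * (γ ^ t * ∑ s, stateDist P π μ t s * ∑ a, π s a * ∑ s', P s a s' * V s') := by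
    rw [sum_stateDist_succ_mul, pow_succ', mul_assoc]
  have hsplit := hV.summable.tsum_eq_zero_add
  rw [tsum_congr hstep, hV.tsum_eq, hPV.tsum_eq, pow_zero, one_mul] at hsplit
  simp only [stateDist] at hsplit
  field_simp at hsplit
  linarith

end MDP

section Bellman

/-- The one-step Bellman backup `Q_V(x, a) = R(x, a) + γ ∑ s', P(s'|x, a) V(s')` of a function `V`
on `S`. The type `X` of conditioning variables is `S` for the MDP itself and `Z` for a latent model,
whose transitions also land in `S`. -/
def bellmanQ {X : Type*} [Fintype S] (P : X → A → S → ℝ) (R : X → A → ℝ) (γ : ℝ) (V : S → ℝ)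
    (x : X) (a : A) : ℝ :=
  R x a + γ * ∑ s', P x a s' * V s'

/-- The Bellman evaluation operator of the policy `π`, whose fixed point is the value function
of `π`. -/
def bellmanOp [Fintype S] [Fintype A] (P : S → A → S → ℝ) (R : S → A → ℝ) (γ : ℝ)
    (π : S → A → ℝ) (V : S → ℝ) (s : S) : ℝ :=
  ∑ a, π s a * bellmanQ P R γ V s a

variable [Fintype S] {γ : ℝ} {V : S → ℝ}

lemma abs_bellmanQ_le {X : Type*} {P : X → A → S → ℝ} {R : X → A → ℝ} {r C : ℝ}
    (hP : ∀ x a, P x a ∈ stdSimplex ℝ S) (hγ : 0 ≤ γ) (hR : ∀ x a, |R x a| ≤ r)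
    (hV : ∀ s, |V s| ≤ C) (x : X) (a : A) : |bellmanQ P R γ V x a| ≤ r + γ * C := by
  refine (abs_add_le _ _).trans (add_le_add (hR x a) ?_)
  rw [abs_mul, abs_of_nonneg hγ]
  exact mul_le_mul_of_nonneg_left (abs_sum_mul_le_of_mem_stdSimplex (hP x a) hV) hγ

lemma abs_bellmanQ_sub_le {X Y : Type*} (P : X → A → S → ℝ) (R : X → A → ℝ)
    (P' : Y → A → S → ℝ) (R' : Y → A → ℝ) {C : ℝ} (hγ : 0 ≤ γ) (hV : ∀ s, |V s| ≤ C)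
    (x : X) (y : Y) (a : A) :
    |bellmanQ P R γ V x a - bellmanQ P' R' γ V y a| ≤
      |R x a - R' y a| + 2 * γ * C * dTV (P x a) (P' y a) := by
  have hdiff : bellmanQ P R γ V x a - bellmanQ P' R' γ V y a =
      (R x a - R' y a) + γ * ∑ s', (P x a s' - P' y a s') * V s' := by
    simp only [bellmanQ, sub_mul, sum_sub_distrib]
    ring
  rw [hdiff]
  refine (abs_add_le _ _).trans (add_le_add_right ?_ _)
  rw [abs_mul, abs_of_nonneg hγ, mul_comm 2 γ, mul_assoc γ, mul_assoc γ]
  exact mul_le_mul_of_nonneg_left (abs_sum_sub_mul_le_mul_dTV _ _ hV) hγ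

variable [Fintype A] {P : S → A → S → ℝ} {R : S → A → ℝ} {μ : S → ℝ} {π π' : S → A → ℝ}

lemma contractingWith_bellmanOp (hP : ∀ s a, P s a ∈ stdSimplex ℝ S)
    (hπ : ∀ s, π s ∈ stdSimplex ℝ A) (hγ0 : 0 ≤ γ) (hγ1 : γ < 1) :
    ContractingWith ⟨γ, hγ0⟩ (bellmanOp P R γ π) := by
  refine ⟨by exact_mod_cast hγ1, LipschitzWith.of_dist_le_mul fun V W ↦ ?_⟩
  refine (dist_pi_le_iff (by positivity)).2 fun s ↦ ?_
  have hdiff : bellmanOp P R γ π V s - bellmanOp P R γ π W s =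
      ∑ a, π s a * bellmanQ P 0 γ (V - W) s a := by
    simp only [bellmanOp, bellmanQ, ← sum_sub_distrib, Pi.zero_apply, Pi.sub_apply, mul_sub]
    refine sum_congr rfl fun a _ ↦ ?_
    rw [sum_sub_distrib]
    ring
  rw [Real.dist_eq, hdiff]
  refine abs_sum_mul_le_of_mem_stdSimplex (hπ s) fun a ↦ ?_
  exact (abs_bellmanQ_le (R := 0) hP hγ0 (fun _ _ ↦ abs_zero.le)
    (fun s' ↦ dist_le_pi_dist V W s') s a).trans_eq (zero_add _)

lemma abs_le_div_one_sub_of_bellmanOp_eq_self {r : ℝ} (hP : ∀ s a, P s a ∈ stdSimplex ℝ S)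
    (hπ : ∀ s, π s ∈ stdSimplex ℝ A) (hγ0 : 0 ≤ γ) (hγ1 : γ < 1) (hR : ∀ s a, |R s a| ≤ r)
    (hV : bellmanOp P R γ π V = V) (s : S) : |V s| ≤ r / (1 - γ) := by
  have : Nonempty S := ⟨s⟩
  obtain ⟨m, hm⟩ := Finite.exists_max fun s ↦ |V s|
  have hself : |V m| ≤ r + γ * |V m| := by
    conv_lhs => rw [← hV]
    exact abs_sum_mul_le_of_mem_stdSimplex (hπ m) (abs_bellmanQ_le hP hγ0 hR hm m)
  refine (hm s).trans ?_
  rw [le_div_iff₀ (sub_pos.2 hγ1)]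
  linarith

lemma one_sub_mul_perf_eq_add_sum_bellmanOp_sub (hP : ∀ s a, P s a ∈ stdSimplex ℝ S)
    (hπ : ∀ s, π s ∈ stdSimplex ℝ A) (hμ : μ ∈ stdSimplex ℝ S) (hγ0 : 0 ≤ γ) (hγ1 : γ < 1)
    (V : S → ℝ) :
    (1 - γ) * perf P R π μ γ = (1 - γ) * ∑ s, μ s * V s +
      ∑ s, visitation P π μ γ s * (bellmanOp P R γ π V s - V s) := by
  have hop (s : S) : bellmanOp P R γ π V s =
      ∑ a, π s a * R s a + γ * ∑ a, π s a * ∑ s', P s a s' * V s' := by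
    simp only [bellmanOp, bellmanQ, mul_add, sum_add_distrib, mul_left_comm _ γ, ← mul_sum]
  simp only [hop, mul_sub, mul_add, sum_sub_distrib, sum_add_distrib, mul_left_comm _ γ,
    ← mul_sum, one_sub_mul_perf hP hπ hμ hγ0 hγ1]
  linarith [sum_visitation_mul hP hπ hμ hγ0 hγ1 V]

lemma one_sub_mul_perfDiff_eq_errF (hP : ∀ s a, P s a ∈ stdSimplex ℝ S)
    (hπ : ∀ s, π s ∈ stdSimplex ℝ A) (hπ' : ∀ s, π' s ∈ stdSimplex ℝ A)
    (hμ : μ ∈ stdSimplex ℝ S) (hγ0 : 0 ≤ γ) (hγ1 : γ < 1) (hV : bellmanOp P R γ π V = V) :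
    (1 - γ) * perfDiff P R μ γ π π' =
      errF (visitation P π' μ γ) π' π (bellmanQ P R γ V) := by
  have hperf := one_sub_mul_perf_eq_add_sum_bellmanOp_sub (R := R) hP hπ hμ hγ0 hγ1 V
  have hperf' := one_sub_mul_perf_eq_add_sum_bellmanOp_sub (R := R) hP hπ' hμ hγ0 hγ1 V
  have hadv (s : S) : bellmanOp P R γ π' V s - V s =
      ∑ a, (π' s a - π s a) * bellmanQ P R γ V s a := by
    conv_lhs => rw [← congrFun hV s]
    simp only [bellmanOp, sub_mul, sum_sub_distrib]
  simp only [hV, sub_self, mul_zero, sum_const_zero, add_zero] at hperf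
  rw [perfDiff, abs_sub_comm, ← abs_of_pos (sub_pos.2 hγ1), ← abs_mul,
    mul_sub, hperf, hperf', add_sub_cancel_left, errF]
  simp only [hadv]

end Bellman

section Marginalization

variable [Fintype S] [DecidableEq Z] {φ : S → Z} {ρ : S → ℝ}

lemma margDist_nonneg (hρ : ∀ s, 0 ≤ ρ s) (z : Z) : 0 ≤ margDist φ ρ z :=
  sum_nonneg fun s _ ↦ ite_nonneg (hρ s) le_rfl

lemma eq_zero_of_margDist_eq_zero (hρ : ∀ s, 0 ≤ ρ s) {s : S} (h : margDist φ ρ (φ s) = 0) :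
    ρ s = 0 := by
  simpa using (sum_eq_zero_iff_of_nonneg fun s _ ↦ ite_nonneg (hρ s) le_rfl).1 h s (mem_univ s)

lemma margDist_mul_margPolicy (hρ : ∀ s, 0 ≤ ρ s) (π : S → A → ℝ) (z : Z) (a : A) :
    margDist φ ρ z * margPolicy φ ρ π z a = ∑ s, if φ s = z then ρ s * π s a else 0 := by
  by_cases h : margDist φ ρ z = 0
  · rw [h, zero_mul, sum_eq_zero]
    rintro s -
    split_ifs with hs
    · rw [eq_zero_of_margDist_eq_zero hρ (hs ▸ h), zero_mul]
    · rfl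
  · exact mul_div_cancel₀ _ h

lemma margDist_mul_margPolicy_sub (hρ : ∀ s, 0 ≤ ρ s) (π : S → A → ℝ) (πZ : Z → A → ℝ)
    (z : Z) (a : A) :
    margDist φ ρ z * (margPolicy φ ρ π z a - πZ z a) =
      ∑ s, if φ s = z then ρ s * (π s a - πZ (φ s) a) else 0 := by
  rw [mul_sub, margDist_mul_margPolicy hρ, margDist, sum_mul, ← sum_sub_distrib]
  refine sum_congr rfl fun s _ ↦ ?_
  split_ifs with hs
  · rw [← hs, mul_sub]
  · simp

end Marginalization

section PolicyError

variable [Fintype S] [Fintype A] {ρ : S → ℝ}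

lemma errF_le_errF_add_errF_sub (π₁ π₂ F G : S → A → ℝ) :
    errF ρ π₁ π₂ F ≤ errF ρ π₁ π₂ G + errF ρ π₁ π₂ (F - G) := by
  refine le_of_eq_of_le ?_ (abs_add_le _ _)
  simp only [errF, ← sum_add_distrib, ← mul_add, Pi.sub_apply, add_sub_cancel]

lemma errF_le_sum_abs {π₁ π₂ : S → A → ℝ} (hρ : ∀ s, 0 ≤ ρ s)
    (hπ₁ : ∀ s, π₁ s ∈ stdSimplex ℝ A) (hπ₂ : ∀ s, π₂ s ∈ stdSimplex ℝ A) (F : S → A → ℝ) :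
    errF ρ π₁ π₂ F ≤ ∑ s, ρ s * ∑ a, |F s a| := by
  refine (abs_sum_le_sum_abs _ _).trans (sum_le_sum fun s _ ↦ ?_)
  rw [abs_mul, abs_of_nonneg (hρ s)]
  exact mul_le_mul_of_nonneg_left (abs_sum_sub_mul_le_sum_abs (hπ₁ s) (hπ₂ s)) (hρ s)

variable [DecidableEq Z] {φ : S → Z}

lemma sum_mul_sum_sub_mul_comp_eq_sum_margDist [Fintype Z] (hρ : ∀ s, 0 ≤ ρ s)
    (π : S → A → ℝ) (πZ F : Z → A → ℝ) :
    ∑ s, ρ s * ∑ a, (π s a - πZ (φ s) a) * F (φ s) a =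
      ∑ z, margDist φ ρ z * ∑ a, (margPolicy φ ρ π z a - πZ z a) * F z a := by
  have hz (z : Z) : margDist φ ρ z * ∑ a, (margPolicy φ ρ π z a - πZ z a) * F z a =
      ∑ s, if φ s = z then ρ s * ∑ a, (π s a - πZ (φ s) a) * F (φ s) a else 0 := by
    simp only [mul_sum, ← mul_assoc, margDist_mul_margPolicy_sub hρ, sum_mul]
    rw [sum_comm]
    refine sum_congr rfl fun s _ ↦ ?_
    split_ifs with hs
    · rw [hs]
    · simp
  simp only [hz]
  rw [sum_comm]
  simp

lemma errF_comp_le_sum_margDist_mul_dTV [Fintype Z] (hρ : ∀ s, 0 ≤ ρ s) (π : S → A → ℝ)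
    (πZ : Z → A → ℝ) {F : Z → A → ℝ} {C : ℝ} (hF : ∀ z a, |F z a| ≤ C) :
    errF ρ π (fun s ↦ πZ (φ s)) (fun s ↦ F (φ s)) ≤
      2 * C * ∑ z, margDist φ ρ z * dTV (margPolicy φ ρ π z) (πZ z) := by
  rw [errF, sum_mul_sum_sub_mul_comp_eq_sum_margDist hρ, mul_sum]
  refine (abs_sum_le_sum_abs _ _).trans (sum_le_sum fun z _ ↦ ?_)
  rw [abs_mul, abs_of_nonneg (margDist_nonneg hρ z), mul_left_comm]
  exact mul_le_mul_of_nonneg_left (abs_sum_sub_mul_le_mul_dTV _ _ (hF z)) (margDist_nonneg hρ z)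

end PolicyError

section RepresentationBound

variable [Fintype S] [Fintype A] [Fintype Z] [DecidableEq Z] {P : S → A → S → ℝ}
  {R : S → A → ℝ} {r : ℝ} {μ : S → ℝ} {γ : ℝ} {π : S → A → ℝ} {φ : S → Z}
  {PZ : Z → A → S → ℝ} {RZ : Z → A → ℝ} {πZ : Z → A → ℝ}

lemma one_sub_mul_perfDiff_comp_le (hP : ∀ s a, P s a ∈ stdSimplex ℝ S)
    (hR : ∀ s a, |R s a| ≤ r) (hμ : μ ∈ stdSimplex ℝ S) (hγ0 : 0 ≤ γ) (hγ1 : γ < 1)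
    (hπ : ∀ s, π s ∈ stdSimplex ℝ A) (hPZ : ∀ z a, PZ z a ∈ stdSimplex ℝ S)
    (hRZ : ∀ z a, |RZ z a| ≤ r) (hπZ : ∀ z, πZ z ∈ stdSimplex ℝ A) :
    (1 - γ) * perfDiff P R μ γ (fun s ↦ πZ (φ s)) π ≤
      2 * (r / (1 - γ)) * ∑ z, margDist φ (visitation P π μ γ) z *
          dTV (margPolicy φ (visitation P π μ γ) π z) (πZ z) +
        (∑ s, visitation P π μ γ s * ∑ a, |R s a - RZ (φ s) a| +
          2 * γ * (r / (1 - γ)) *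
            ∑ s, visitation P π μ γ s * ∑ a, dTV (P s a) (PZ (φ s) a)) := by
  set d := visitation P π μ γ
  have hd : ∀ s, 0 ≤ d s := visitation_nonneg hP hπ hμ hγ0 hγ1.le
  have hT := contractingWith_bellmanOp (R := R) hP (fun s ↦ hπZ (φ s)) hγ0 hγ1
  obtain ⟨V, hV⟩ : ∃ V, bellmanOp P R γ (fun s ↦ πZ (φ s)) V = V :=
    ⟨_, hT.fixedPoint_isFixedPt⟩
  have hVr := abs_le_div_one_sub_of_bellmanOp_eq_self hP (fun s ↦ hπZ (φ s)) hγ0 hγ1 hR hV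
  have hγ : 1 - γ ≠ 0 := (sub_pos.2 hγ1).ne'
  have hQZ (z : Z) (a : A) : |bellmanQ PZ RZ γ V z a| ≤ r / (1 - γ) :=
    (abs_bellmanQ_le hPZ hγ0 hRZ hVr z a).trans_eq (by field_simp; ring)
  rw [one_sub_mul_perfDiff_eq_errF hP (fun s ↦ hπZ (φ s)) hπ hμ hγ0 hγ1 hV]
  refine (errF_le_errF_add_errF_sub _ _ _ fun s ↦ bellmanQ PZ RZ γ V (φ s)).trans <|
    add_le_add (errF_comp_le_sum_margDist_mul_dTV hd π πZ hQZ) ?_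
  refine (errF_le_sum_abs hd hπ (fun s ↦ hπZ (φ s)) _).trans ?_
  rw [mul_sum, ← sum_add_distrib]
  refine sum_le_sum fun s _ ↦ ?_
  rw [mul_left_comm, ← mul_add]
  refine mul_le_mul_of_nonneg_left ?_ (hd s)
  rw [mul_sum, ← sum_add_distrib]
  exact sum_le_sum fun a _ ↦ abs_bellmanQ_sub_le P R PZ RZ hγ0 hVr s (φ s) a

end RepresentationBound

theorem off_policy_representation_bound_tv
    [Fintype S] [Fintype A] [Fintype Z] [Nonempty S] [Nonempty A] [DecidableEq Z]
    (P : S → A → S → ℝ) (hP0 : ∀ s a s', 0 ≤ P s a s')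
    (hP1 : ∀ s a, ∑ s' : S, P s a s' = 1)
    (R : S → A → ℝ) (Rmax : ℝ) (hRmax : 0 ≤ Rmax) (hR : ∀ s a, |R s a| ≤ Rmax)
    (μ : S → ℝ) (hμ0 : ∀ s, 0 ≤ μ s) (hμ1 : ∑ s : S, μ s = 1)
    (γ : ℝ) (hγ0 : 0 ≤ γ) (hγ1 : γ < 1)
    (πstar : S → A → ℝ)
    (hπs0 : ∀ s a, 0 ≤ πstar s a) (hπs1 : ∀ s, ∑ a : A, πstar s a = 1)
    (doff : S → ℝ) (hdoff0 : ∀ s, 0 ≤ doff s) (hdoff1 : ∑ s : S, doff s = 1)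
    (hsupp : ∀ s, 0 < visitation P πstar μ γ s → 0 < doff s)
    (φ : S → Z)
    (RZ : Z → A → ℝ) (hRZ : ∀ z a, |RZ z a| ≤ Rmax)
    (PZ : Z → A → S → ℝ) (hPZ0 : ∀ z a s', 0 ≤ PZ z a s')
    (hPZ1 : ∀ z a, ∑ s' : S, PZ z a s' = 1)
    (hPZpos : ∀ s a s', 0 < P s a s' → 0 < doff s → 0 < PZ (φ s) a s')
    (πZ : Z → A → ℝ) (hπZ0 : ∀ z a, 0 ≤ πZ z a) (hπZ1 : ∀ z, ∑ a : A, πZ z a = 1) :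
    perfDiff P R μ γ (fun s => πZ (φ s)) πstar ≤
      (1 + Real.sqrt (dChi2 (visitation P πstar μ γ) doff)) *
          ((Fintype.card A : ℝ) / (1 - γ) *
              Real.sqrt (∑ s : S, doff s *
                ((1 / (Fintype.card A : ℝ)) * ∑ a : A, (R s a - RZ (φ s) a) ^ 2))
            + 2 * γ * (Fintype.card A : ℝ) * Rmax / (1 - γ) ^ 2 *
              Real.sqrt ((1 / 2) * ∑ s : S, doff s *
                ((1 / (Fintype.card A : ℝ)) * ∑ a : A, dKL (P s a) (PZ (φ s) a))))
        + (2 * Rmax / (1 - γ) ^ 2) *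
            ∑ z : Z, margDist φ (visitation P πstar μ γ) z *
              dTV (margPolicy φ (visitation P πstar μ γ) πstar z) (πZ z) := by
  set d := visitation P πstar μ γ
  have hP (s a) : P s a ∈ stdSimplex ℝ S := ⟨hP0 s a, hP1 s a⟩
  have hPZ (z a) : PZ z a ∈ stdSimplex ℝ S := ⟨hPZ0 z a, hPZ1 z a⟩
  have hπs (s) : πstar s ∈ stdSimplex ℝ A := ⟨hπs0 s, hπs1 s⟩
  have hd : ∀ s, 0 ≤ d s := visitation_nonneg hP hπs ⟨hμ0, hμ1⟩ hγ0 hγ1.le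
  have hdoff (s) (h : doff s = 0) : d s = 0 :=
    ((hd s).eq_or_lt.resolve_right fun hpos ↦ (hsupp s hpos).ne' h).symm
  have hJR := sum_mul_sum_le_one_add_sqrt_dChi2_mul_card_mul_sqrt ⟨hdoff0, hdoff1⟩ hdoff
    (f := fun s a ↦ |R s a - RZ (φ s) a|) fun s _ a ↦ (sq_abs _).le
  have hJT := sum_mul_sum_le_one_add_sqrt_dChi2_mul_card_mul_sqrt ⟨hdoff0, hdoff1⟩ hdoff
    (f := fun s a ↦ dTV (P s a) (PZ (φ s) a)) fun s hs a ↦ dTV_sq_le_half_dKL (hP s a)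
      (hPZ (φ s) a) fun s' h ↦
        ((hP0 s a s').eq_or_lt.resolve_right fun hpos ↦ (hPZpos s a s' hpos hs).ne' h).symm
  simp only [← mul_sum, mul_left_comm _ (1 / 2 : ℝ)] at hJT
  have hmain := one_sub_mul_perfDiff_comp_le (φ := φ) hP hR ⟨hμ0, hμ1⟩ hγ0 hγ1 hπs hPZ hRZ
    fun z ↦ ⟨hπZ0 z, hπZ1 z⟩
  have hγ : 0 < 1 - γ := sub_pos.2 hγ1
  refine le_of_mul_le_mul_left (hmain.trans ?_) hγ
  refine (add_le_add_right (add_le_add hJR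
    (mul_le_mul_of_nonneg_left hJT (by positivity : 0 ≤ 2 * γ * (Rmax / (1 - γ))))) _).trans_eq ?_
  field_simp
  ring
end
end

section
/- Expected total-variation error of the empirical distribution: Let ρ be a probability distribution on a finite set X with |X| = k, and let X_1, …, X_n be independent random variables each with law ρ. Let ρ̂_n be the empirical distribution, ρ̂_n(x) = (1/n)·#{j ∈ {1,…,n} : X_j = x}. Then E[D_TV(ρ ‖ ρ̂_n)] ≤ (1/(2√n)) ∑_{x∈X} √(ρ(x)) ≤ (1/2)·√(k/n). -/
open Finset

noncomputable section

variable {S A Z : Type*}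

/-!
For fixed `x`, the empirical frequency of `x` is an average of `n` pairwise independent indicators
of mean `ρ x`, so its variance is at most `ρ x / n`, and by Jensen's inequality its mean absolute
deviation from `ρ x` is at most `√(ρ x / n)`. Summing over `x` bounds the expected total variation
error, and the Cauchy–Schwarz inequality bounds `∑ x, √(ρ x)` by `√k`.
-/

open MeasureTheory ProbabilityTheory

theorem sum_sqrt_le_sqrt_card_mul_sum {ι : Type*} (s : Finset ι) {f : ι → ℝ}
    (hf : ∀ i ∈ s, 0 ≤ f i) : ∑ i ∈ s, √(f i) ≤ √(#s * ∑ i ∈ s, f i) := by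
  refine Real.le_sqrt_of_sq_le (sq_sum_le_card_mul_sum_sq.trans_eq ?_)
  rw [sum_congr rfl fun i hi => Real.sq_sqrt (hf i hi)]

section Variance

variable {Ω : Type*} {mΩ : MeasurableSpace Ω} {P : Measure Ω}

theorem integral_abs_sub_integral_le_sqrt_variance [IsProbabilityMeasure P] {Y : Ω → ℝ}
    (hY : MemLp Y 2 P) : ∫ ω, |Y ω - P[Y]| ∂P ≤ √Var[Y; P] := by
  have hdev : MemLp (fun ω => |Y ω - P[Y]|) 2 P := (hY.sub (memLp_const _)).abs
  have hvar : 0 ≤ Var[fun ω => |Y ω - P[Y]|; P] := variance_nonneg _ _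
  rw [variance_eq_sub hdev] at hvar
  refine Real.le_sqrt_of_sq_le ?_
  simpa [variance_eq_integral hY.aemeasurable] using hvar

theorem variance_average_le {ι : Type*} [Fintype ι] {Y : ι → Ω → ℝ} {v : ℝ}
    (hY : ∀ i, MemLp (Y i) 2 P) (hindep : Pairwise fun i j => Y i ⟂ᵢ[P] Y j)
    (hvar : ∀ i, Var[Y i; P] ≤ v) :
    Var[fun ω => (∑ i, Y i ω) / Fintype.card ι; P] ≤ v / Fintype.card ι := by
  have hsum : Var[∑ i, Y i; P] ≤ Fintype.card ι * v := by
    rw [IndepFun.variance_sum (fun i _ => hY i) fun i _ j _ hij => hindep hij]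
    simpa using sum_le_sum fun i (_ : i ∈ univ) => hvar i
  calc Var[fun ω => (∑ i, Y i ω) / Fintype.card ι; P]
      = Var[∑ i, Y i; P] * ((Fintype.card ι : ℝ)⁻¹) ^ 2 := by
        simp only [div_eq_mul_inv, variance_mul_const, ← Finset.sum_apply]
    _ ≤ Fintype.card ι * v * ((Fintype.card ι : ℝ)⁻¹) ^ 2 := by gcongr
    _ = v / Fintype.card ι := by
        rcases eq_or_ne (Fintype.card ι : ℝ) 0 with h | h
        · simp [h]
        · field_simp

end Variance

/-- The empirical distribution of the finite sample `s`, indexed by an arbitrary finite type: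
`empiricalDist s x` is the proportion of sample points equal to `x`. It is identically `0` for the
empty sample, by the convention `x / 0 = 0`. -/
def empiricalDist {ι X : Type*} [Fintype ι] [DecidableEq X] (s : ι → X) (x : X) : ℝ :=
  #{i | s i = x} / Fintype.card ι

theorem empiricalDist_eq_sum_indicator {ι X : Type*} [Fintype ι] [DecidableEq X]
    (s : ι → X) (x : X) :
    empiricalDist s x = (∑ i, ({x} : Set X).indicator 1 (s i)) / Fintype.card ι := by
  simp [empiricalDist, Set.indicator_apply]

section HasLaw

variable {Ω X : Type*} {mΩ : MeasurableSpace Ω} {P : Measure Ω} {mX : MeasurableSpace X}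
  {μ : Measure X} {Y : Ω → X} {s : Set X}

theorem memLp_indicator_one_comp [IsFiniteMeasure P] (hY : AEMeasurable Y P)
    (hs : MeasurableSet s) (p : ENNReal) :
    MemLp (fun ω => s.indicator (1 : X → ℝ) (Y ω)) p P :=
  (memLp_indicator_const p hs (1 : ℝ) (.inr (measure_ne_top _ s))).comp_of_map hY

theorem integral_indicator_one_comp (hY : HasLaw Y μ P) (hs : MeasurableSet s) :
    ∫ ω, s.indicator (1 : X → ℝ) (Y ω) ∂P = μ.real s := by
  rw [← integral_indicator_one hs]
  exact hY.integral_comp (measurable_one.indicator hs).aestronglyMeasurable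

theorem variance_indicator_one_comp_le [IsProbabilityMeasure P] (hY : HasLaw Y μ P)
    (hs : MeasurableSet s) : Var[fun ω => s.indicator (1 : X → ℝ) (Y ω); P] ≤ μ.real s := by
  have hsq (ω : Ω) : s.indicator (1 : X → ℝ) (Y ω) ^ 2 = s.indicator 1 (Y ω) := by
    by_cases h : Y ω ∈ s <;> simp [h]
  refine (variance_le_expectation_sq (memLp_indicator_one_comp hY.aemeasurable hs 2).1).trans_eq ?_
  simp only [Pi.pow_apply, hsq, integral_indicator_one_comp hY hs]

end HasLaw

section EmpiricalDist

variable {Ω X ι : Type*} {mΩ : MeasurableSpace Ω} {P : Measure Ω}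
  [MeasurableSpace X] [MeasurableSingletonClass X] {μ : Measure X} [DecidableEq X] [Fintype ι]
  {Y : ι → Ω → X}

theorem memLp_empiricalDist [IsFiniteMeasure P] (hY : ∀ i, AEMeasurable (Y i) P) (x : X)
    (p : ENNReal) :
    MemLp (fun ω => empiricalDist (Y · ω) x) p P := by
  simp only [empiricalDist_eq_sum_indicator, div_eq_mul_inv]
  exact (memLp_finsetSum _ fun i _ =>
    memLp_indicator_one_comp (hY i) (measurableSet_singleton x) p).mul_const _

theorem integral_empiricalDist [IsFiniteMeasure P] [Nonempty ι] (hY : ∀ i, HasLaw (Y i) μ P)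
    (x : X) :
    ∫ ω, empiricalDist (Y · ω) x ∂P = μ.real {x} := by
  have hx : MeasurableSet {x} := measurableSet_singleton x
  have hint (i : ι) : Integrable (fun ω => ({x} : Set X).indicator (1 : X → ℝ) (Y i ω)) P :=
    memLp_one_iff_integrable.mp (memLp_indicator_one_comp (hY i).aemeasurable hx 1)
  simp only [empiricalDist_eq_sum_indicator]
  rw [integral_div, integral_finsetSum _ fun i _ => hint i]
  simp only [integral_indicator_one_comp (hY _) hx, sum_const, card_univ, nsmul_eq_mul]
  exact mul_div_cancel_left₀ _ (Nat.cast_ne_zero.mpr Fintype.card_ne_zero)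

theorem variance_empiricalDist_le [IsProbabilityMeasure P] (hY : ∀ i, HasLaw (Y i) μ P)
    (hindep : Pairwise fun i j => Y i ⟂ᵢ[P] Y j) (x : X) :
    Var[fun ω => empiricalDist (Y · ω) x; P] ≤ μ.real {x} / Fintype.card ι := by
  have hx : MeasurableSet {x} := measurableSet_singleton x
  have hind : Measurable (({x} : Set X).indicator (1 : X → ℝ)) := measurable_one.indicator hx
  simp only [empiricalDist_eq_sum_indicator]
  exact variance_average_le (fun i => memLp_indicator_one_comp (hY i).aemeasurable hx 2)
    (fun i j hij => (hindep hij).comp hind hind)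
    fun i => variance_indicator_one_comp_le (hY i) hx

theorem integral_abs_sub_empiricalDist_le [IsProbabilityMeasure P] [Nonempty ι]
    (hY : ∀ i, HasLaw (Y i) μ P) (hindep : Pairwise fun i j => Y i ⟂ᵢ[P] Y j) (x : X) :
    ∫ ω, |μ.real {x} - empiricalDist (Y · ω) x| ∂P ≤ √(μ.real {x} / Fintype.card ι) := by
  calc ∫ ω, |μ.real {x} - empiricalDist (Y · ω) x| ∂P
      = ∫ ω, |empiricalDist (Y · ω) x - ∫ ω, empiricalDist (Y · ω) x ∂P| ∂P := by
        simp only [integral_empiricalDist hY, abs_sub_comm]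
    _ ≤ √Var[fun ω => empiricalDist (Y · ω) x; P] :=
        integral_abs_sub_integral_le_sqrt_variance
          (memLp_empiricalDist (fun i => (hY i).aemeasurable) x 2)
    _ ≤ √(μ.real {x} / Fintype.card ι) :=
        Real.sqrt_le_sqrt (variance_empiricalDist_le hY hindep x)

theorem integral_dTV_empiricalDist_le [IsProbabilityMeasure P] [Fintype X] [Nonempty ι]
    (hY : ∀ i, HasLaw (Y i) μ P) (hindep : Pairwise fun i j => Y i ⟂ᵢ[P] Y j) :
    ∫ ω, dTV (fun x => μ.real {x}) (empiricalDist (Y · ω)) ∂P ≤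
      1 / (2 * √(Fintype.card ι)) * ∑ x, √(μ.real {x}) := by
  have hint (x : X) : Integrable (fun ω => |μ.real {x} - empiricalDist (Y · ω) x|) P :=
    ((integrable_const _).sub <| memLp_one_iff_integrable.mp <|
      memLp_empiricalDist (fun i => (hY i).aemeasurable) x 1).abs
  calc ∫ ω, dTV (fun x => μ.real {x}) (empiricalDist (Y · ω)) ∂P
      = 1 / 2 * ∑ x, ∫ ω, |μ.real {x} - empiricalDist (Y · ω) x| ∂P := by
        simp only [dTV]
        rw [integral_const_mul, integral_finsetSum _ fun x _ => hint x]
    _ ≤ 1 / 2 * ∑ x, √(μ.real {x} / Fintype.card ι) := by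
        gcongr with x
        exact integral_abs_sub_empiricalDist_le hY hindep x
    _ = 1 / (2 * √(Fintype.card ι)) * ∑ x, √(μ.real {x}) := by
        simp only [Real.sqrt_div measureReal_nonneg, ← sum_div]
        ring

end EmpiricalDist

section FiniteSpace

variable {X : Type*} [Fintype X] [MeasurableSpace X] [MeasurableSingletonClass X]

theorem exists_isProbabilityMeasure_real_singleton_eq {ρ : X → ℝ} (hρ : ∀ x, 0 ≤ ρ x)
    (hsum : ∑ x, ρ x = 1) :
    ∃ μ : Measure X, IsProbabilityMeasure μ ∧ ∀ x, μ.real {x} = ρ x := by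
  have hmass : ∑ x, ENNReal.ofReal (ρ x) = 1 := by
    rw [← ENNReal.ofReal_sum_of_nonneg fun x _ => hρ x, hsum, ENNReal.ofReal_one]
  refine ⟨(PMF.ofFintype _ hmass).toMeasure, inferInstance, fun x => ?_⟩
  rw [measureReal_def, PMF.toMeasure_apply_singleton _ _ (measurableSet_singleton x),
    PMF.ofFintype_apply, ENNReal.toReal_ofReal (hρ x)]

theorem sum_sqrt_measureReal_singleton_le (μ : Measure X) [IsProbabilityMeasure μ] :
    ∑ x, √(μ.real {x}) ≤ √(Fintype.card X) := by
  simpa using sum_sqrt_le_sqrt_card_mul_sum univ fun x _ => measureReal_nonneg (μ := μ) (s := {x})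

end FiniteSpace

section Pi

variable {ι : Type*} [Fintype ι] {X : ι → Type*} [∀ i, MeasurableSpace (X i)]

theorem pairwise_indepFun_eval_pi (μ : ∀ i, Measure (X i)) [∀ i, IsProbabilityMeasure (μ i)] :
    Pairwise fun i j => Function.eval i ⟂ᵢ[Measure.pi μ] Function.eval j :=
  fun _ _ hij => (iIndepFun_pi (X := fun _ => id) fun _ => aemeasurable_id).indepFun hij

theorem integral_pi_eq_sum_prod_smul [DecidableEq ι] [∀ i, Fintype (X i)]
    [∀ i, MeasurableSingletonClass (X i)] {E : Type*} [NormedAddCommGroup E] [NormedSpace ℝ E]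
    [CompleteSpace E] (μ : ∀ i, Measure (X i)) [∀ i, IsFiniteMeasure (μ i)]
    (F : (∀ i, X i) → E) :
    ∫ ω, F ω ∂Measure.pi μ = ∑ ω, (∏ i, (μ i).real {ω i}) • F ω := by
  simp [integral_fintype .of_finite, measureReal_def, ENNReal.toReal_prod]

end Pi

theorem expected_tv_error_of_empirical_distribution_general
    {Ω X ι : Type*} {mΩ : MeasurableSpace Ω} {P : Measure Ω} [IsProbabilityMeasure P]
    [Fintype X] [DecidableEq X] [MeasurableSpace X] [MeasurableSingletonClass X] {μ : Measure X}
    [Fintype ι] [Nonempty ι] {Y : ι → Ω → X} (hY : ∀ i, HasLaw (Y i) μ P)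
    (hindep : Pairwise fun i j => Y i ⟂ᵢ[P] Y j) :
    ∫ ω, dTV (fun x => μ.real {x}) (empiricalDist (Y · ω)) ∂P ≤
        1 / (2 * √(Fintype.card ι)) * ∑ x, √(μ.real {x}) ∧
      1 / (2 * √(Fintype.card ι)) * ∑ x, √(μ.real {x}) ≤
        1 / 2 * √(Fintype.card X / Fintype.card ι) := by
  refine ⟨integral_dTV_empiricalDist_le hY hindep, ?_⟩
  have : IsProbabilityMeasure μ := (hY (Classical.arbitrary ι)).isProbabilityMeasure_iff.mp ‹_›
  calc 1 / (2 * √(Fintype.card ι)) * ∑ x, √(μ.real {x})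
      ≤ 1 / (2 * √(Fintype.card ι)) * √(Fintype.card X) := by
        gcongr
        exact sum_sqrt_measureReal_singleton_le μ
    _ = 1 / 2 * √(Fintype.card X / Fintype.card ι) := by
        rw [Real.sqrt_div (Nat.cast_nonneg _)]
        ring

theorem expected_tv_error_of_empirical_distribution
    {X : Type*} [Fintype X] [DecidableEq X]
    (n : ℕ) (hn : 0 < n)
    (ρ : X → ℝ) (hρ0 : ∀ x, 0 ≤ ρ x) (hρ1 : ∑ x : X, ρ x = 1) :
    (∑ ω : Fin n → X, (∏ j : Fin n, ρ (ω j)) *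
          dTV ρ (fun x => ((univ.filter fun j : Fin n => ω j = x).card : ℝ) / n)) ≤
        1 / (2 * Real.sqrt n) * ∑ x : X, Real.sqrt (ρ x) ∧
      1 / (2 * Real.sqrt n) * ∑ x : X, Real.sqrt (ρ x) ≤
        (1 / 2) * Real.sqrt ((Fintype.card X : ℝ) / n) := by
  let _ : MeasurableSpace X := ⊤
  have : NeZero n := ⟨hn.ne'⟩
  obtain ⟨μ, _, hμ⟩ := exists_isProbabilityMeasure_real_singleton_eq hρ0 hρ1
  simpa only [integral_pi_eq_sum_prod_smul, smul_eq_mul, dTV, empiricalDist, Function.eval,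
    Fintype.card_fin, hμ] using
    expected_tv_error_of_empirical_distribution_general
      (fun j : Fin n => (measurePreserving_eval (fun _ => μ) j).hasLaw)
      (pairwise_indepFun_eval_pi fun _ => μ)
end
end

section
/- Conditional total-variation decomposition: Let S and A be nonempty finite sets, and let x and x̂ be probability distributions on S×A with marginals ρ(s) = ∑_a x(s,a) and ρ̂(s) = ∑_a x̂(s,a), and conditionals π(a|s) = x(s,a)/ρ(s) for s with ρ(s) > 0 and π̂(a|s) = x̂(s,a)/ρ̂(s) for s with ρ̂(s) > 0. Assume ρ̂(s) > 0 whenever ρ(s) > 0. Then ∑_{s∈S} ρ(s) · D_TV(π(·|s) ‖ π̂(·|s)) ≤ D_TV(ρ ‖ ρ̂) + D_TV(x ‖ x̂). -/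
open Finset

noncomputable section

variable {S A Z : Type*}

/-!
Write `ρ`, `ρ'` for the marginals of `x`, `xh` and `π`, `π'` for their conditionals, and compare
`x` with `xh` through the hybrid `ρ π'`. Over a state `s`, scaling by `ρ s` turns the distance
between `π s` and `π' s` into the distance between `x (s, ·)` and `ρ s • π' s`. By the triangle
inequality it is at most the distance between `x (s, ·)` and `xh (s, ·) = ρ' s • π' s`, plus that
between `ρ' s • π' s` and `ρ s • π' s`. The latter is `|ρ s - ρ' s| / 2`, because `π' s` has total
mass one. Summing over `s` gives the two distances of the bound.
-/

section TotalVariation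

variable {X Y : Type*} [Fintype X] [Fintype Y]

theorem dTV_nonneg (p q : X → ℝ) : 0 ≤ dTV p q := by
  unfold dTV
  positivity

theorem dTV_triangle (p q r : X → ℝ) : dTV p r ≤ dTV p q + dTV q r := by
  simp only [dTV, ← mul_add, ← sum_add_distrib]
  gcongr with x
  exact abs_sub_le (p x) (q x) (r x)

theorem dTV_const_mul (c : ℝ) (p q : X → ℝ) :
    dTV (fun x => c * p x) (fun x => c * q x) = |c| * dTV p q := by
  simp only [dTV, ← mul_sub, abs_mul, ← mul_sum]
  ring

theorem dTV_mul_const (b c : ℝ) {q : X → ℝ} (hq : ∀ x, 0 ≤ q x) :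
    dTV (fun x => b * q x) (fun x => c * q x) = 1 / 2 * (|b - c| * ∑ x, q x) := by
  simp only [dTV, ← sub_mul, abs_mul, abs_of_nonneg (hq _), ← mul_sum]

theorem dTV_prod (p q : X × Y → ℝ) :
    dTV p q = ∑ x, dTV (fun y => p (x, y)) (fun y => q (x, y)) := by
  simp only [dTV, Fintype.sum_prod_type, mul_sum]

theorem abs_sum_mul_dTV_div_sum_le (p : X → ℝ) {q : X → ℝ} (hq : ∀ x, 0 ≤ q x)
    (hpq : ∑ x, p x ≠ 0 → ∑ x, q x ≠ 0) :
    |∑ x, p x| * dTV (fun x => p x / ∑ y, p y) (fun x => q x / ∑ y, q y) ≤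
      1 / 2 * |∑ x, p x - ∑ x, q x| + dTV p q := by
  have hmass : 0 ≤ ∑ x, q x := sum_nonneg fun x _ => hq x
  rcases eq_or_ne (∑ x, p x) 0 with hp | hp
  · rw [hp, abs_zero, zero_mul]
    exact add_nonneg (by positivity) (dTV_nonneg p q)
  specialize hpq hp
  set m := ∑ x, p x
  set n := ∑ x, q x
  have hrescale : dTV q (fun x => m / n * q x) = 1 / 2 * |m - n| := by
    calc dTV q (fun x => m / n * q x)
        = 1 / 2 * (|1 - m / n| * n) := by simpa only [one_mul] using dTV_mul_const 1 (m / n) hq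
      _ = 1 / 2 * |(1 - m / n) * n| := by rw [abs_mul, abs_of_nonneg hmass]
      _ = 1 / 2 * |m - n| := by rw [sub_mul, one_mul, div_mul_cancel₀ _ hpq, abs_sub_comm]
  calc |m| * dTV (fun x => p x / m) (fun x => q x / n)
      = dTV p (fun x => m / n * q x) := by
        simp only [← dTV_const_mul, mul_div_cancel₀ _ hp, mul_div_left_comm m, mul_comm (q _)]
    _ ≤ dTV p q + dTV q (fun x => m / n * q x) := dTV_triangle _ _ _
    _ = 1 / 2 * |m - n| + dTV p q := by rw [hrescale, add_comm]

end TotalVariation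

theorem conditional_tv_decomposition_general [Fintype S] [Fintype A] (x : S × A → ℝ)
    {xh : S × A → ℝ} (hxh : ∀ p, 0 ≤ xh p)
    (hsupp : ∀ s, ∑ a : A, x (s, a) ≠ 0 → ∑ a : A, xh (s, a) ≠ 0) :
    ∑ s : S, |∑ a : A, x (s, a)| *
        dTV (fun a => x (s, a) / ∑ b : A, x (s, b))
          (fun a => xh (s, a) / ∑ b : A, xh (s, b)) ≤
      dTV (fun s => ∑ a : A, x (s, a)) (fun s => ∑ a : A, xh (s, a)) + dTV x xh := by
  rw [dTV_prod, dTV, mul_sum, ← sum_add_distrib]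
  exact sum_le_sum fun s _ => abs_sum_mul_dTV_div_sum_le _ (fun a => hxh (s, a)) (hsupp s)

theorem conditional_tv_decomposition [Fintype S] [Fintype A] [Nonempty S] [Nonempty A]
    (x xh : S × A → ℝ)
    (hx0 : ∀ p, 0 ≤ x p) (hx1 : ∑ p : S × A, x p = 1)
    (hxh0 : ∀ p, 0 ≤ xh p) (hxh1 : ∑ p : S × A, xh p = 1)
    (hsupp : ∀ s, 0 < ∑ a : A, x (s, a) → 0 < ∑ a : A, xh (s, a)) :
    ∑ s : S, (∑ a : A, x (s, a)) *
        dTV (fun a => x (s, a) / ∑ b : A, x (s, b))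
          (fun a => xh (s, a) / ∑ b : A, xh (s, b)) ≤
      dTV (fun s => ∑ a : A, x (s, a)) (fun s => ∑ a : A, xh (s, a)) + dTV x xh := by
  have hρ (s : S) : 0 ≤ ∑ a : A, x (s, a) := sum_nonneg fun a _ => hx0 (s, a)
  simpa only [abs_of_nonneg (hρ _)] using
    conditional_tv_decomposition_general x hxh0 fun s hs => (hsupp s ((hρ s).lt_of_ne' hs)).ne'
end
end

section
/- Expected conditional total-variation error of empirical conditionals: Let S and A be nonempty finite sets, ρ a probability distribution on S, and π a map assigning to each s∈S a probability distribution π(·|s) on A. Let (s_1,a_1), …, (s_n,a_n) be i.i.d. with joint law x(s,a) = ρ(s)π(a|s). Define the empirical conditional π̂(a|s) = #{j : (s_j,a_j)=(s,a)} / #{j : s_j = s} for s with #{j : s_j = s} > 0, and let π̂(·|s) be an arbitrary fixed probability distribution on A for s not appearing in the sample. Then E[ ∑_{s∈S} ρ(s) · D_TV(π(·|s) ‖ π̂(·|s)) ] ≤ √( |S||A| / n ). -/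
open Finset

noncomputable section

variable {S A Z : Type*}

/-! Passing from conditionals to joint laws costs a factor two: `∑ ρ(s) D_TV(π(·|s) ‖ κ(·|s))` is at
most `‖ρ π - τ κ‖₁` for every weight `τ`, because `|ρ(s) - τ(s)|` is itself bounded by the `ℓ¹`
distance of the two fibres over `s`. Taking `τ` to be the empirical marginal, `τ κ` is the empirical
joint law whatever the default conditional is, and each of its coordinates has variance at most
`p(s, a) / n`. Jensen and Cauchy–Schwarz turn this into the bound on the expected `ℓ¹` error. -/

/-- The joint mass function `(s, a) ↦ ρ(s) κ(a | s)` of a marginal `ρ` and a conditional `κ`. -/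
def jointMass (ρ : S → ℝ) (κ : S → A → ℝ) (z : S × A) : ℝ :=
  ρ z.1 * κ z.1 z.2

/-- The mass function of an i.i.d. sample, indexed by `ι`, of observations with mass function
`p`. -/
def iidMass {ι X : Type*} [Fintype ι] (p : X → ℝ) (ω : ι → X) : ℝ :=
  ∏ j, p (ω j)

/-- The empirical mass function of a sample `ω`; it is identically `0` for an empty sample. -/
def empiricalMass {ι X : Type*} [Fintype ι] [DecidableEq X] (ω : ι → X) (x : X) : ℝ :=
  #{j | ω j = x} / Fintype.card ι

/-- The empirical conditional mass function of a sample of pairs, equal to `κ₀ s` at those `s` that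
do not occur in the sample. -/
def empiricalConditional {ι : Type*} [Fintype ι] [DecidableEq S] [DecidableEq A]
    (κ₀ : S → A → ℝ) (ω : ι → S × A) (s : S) (a : A) : ℝ :=
  if 0 < #{j | (ω j).1 = s} then (#{j | ω j = (s, a)} : ℝ) / #{j | (ω j).1 = s} else κ₀ s a

theorem jointMass_mem_stdSimplex [Fintype S] [Fintype A] {ρ : S → ℝ} {κ : S → A → ℝ}
    (hρ : ρ ∈ stdSimplex ℝ S) (hκ : ∀ s, κ s ∈ stdSimplex ℝ A) :
    jointMass ρ κ ∈ stdSimplex ℝ (S × A) := by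
  refine ⟨fun z => mul_nonneg (hρ.1 _) ((hκ _).1 _), ?_⟩
  simp only [jointMass, Fintype.sum_prod_type, ← mul_sum, (hκ _).2, mul_one, hρ.2]

theorem mul_dTV_le_sum_abs_sub [Fintype A] {p q : A → ℝ} {r : ℝ} (hr : 0 ≤ r)
    (hp : ∑ a, p a = 1) (hq : q ∈ stdSimplex ℝ A) (t : ℝ) :
    r * dTV p q ≤ ∑ a, |r * p a - t * q a| := by
  have total_mass_diff : |r - t| ≤ ∑ a, |r * p a - t * q a| := by
    simpa only [sum_sub_distrib, ← mul_sum, hp, hq.2, mul_one] using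
      abs_sum_le_sum_abs (fun a => r * p a - t * q a) univ
  have scaled_diff (a : A) : r * |p a - q a| ≤ |r * p a - t * q a| + |r - t| * q a :=
    calc r * |p a - q a| = |r * (p a - q a)| := by rw [abs_mul, abs_of_nonneg hr]
      _ = |(r * p a - t * q a) - (r - t) * q a| := by ring_nf
      _ ≤ |r * p a - t * q a| + |(r - t) * q a| := abs_sub _ _
      _ = |r * p a - t * q a| + |r - t| * q a := by rw [abs_mul, abs_of_nonneg (hq.1 a)]
  have summed : r * ∑ a, |p a - q a| ≤ ∑ a, |r * p a - t * q a| + |r - t| := by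
    simpa only [← mul_sum, sum_add_distrib, hq.2, mul_one] using
      sum_le_sum fun a (_ : a ∈ univ) => scaled_diff a
  unfold dTV
  linarith

theorem sum_mul_dTV_le_two_mul_dTV_jointMass [Fintype S] [Fintype A] {ρ : S → ℝ}
    {κ κ' : S → A → ℝ} (hρ : ∀ s, 0 ≤ ρ s) (hκ : ∀ s, ∑ a, κ s a = 1)
    (hκ' : ∀ s, κ' s ∈ stdSimplex ℝ A) (ρ' : S → ℝ) :
    ∑ s, ρ s * dTV (κ s) (κ' s) ≤ 2 * dTV (jointMass ρ κ) (jointMass ρ' κ') :=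
  calc ∑ s, ρ s * dTV (κ s) (κ' s) ≤ ∑ s, ∑ a, |ρ s * κ s a - ρ' s * κ' s a| :=
        sum_le_sum fun s _ => mul_dTV_le_sum_abs_sub (hρ s) (hκ s) (hκ' s) (ρ' s)
    _ = 2 * dTV (jointMass ρ κ) (jointMass ρ' κ') := by
        simp only [dTV, jointMass, Fintype.sum_prod_type]
        ring

section IID

variable {ι X : Type*} [Fintype ι] [DecidableEq ι] [Fintype X] {p : X → ℝ}

theorem sum_iidMass_mul_prod (p : X → ℝ) (g : ι → X → ℝ) :
    ∑ ω : ι → X, iidMass p ω * ∏ j, g j (ω j) = ∏ j, ∑ x, p x * g j x := by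
  simp only [iidMass, ← prod_mul_distrib, Fintype.prod_sum]

theorem iidMass_mem_stdSimplex (hp : p ∈ stdSimplex ℝ X) :
    (iidMass p : (ι → X) → ℝ) ∈ stdSimplex ℝ (ι → X) :=
  ⟨fun _ => prod_nonneg fun _ _ => hp.1 _, by
    simpa only [prod_const_one, mul_one, hp.2] using sum_iidMass_mul_prod (ι := ι) p fun _ _ => 1⟩

theorem sum_iidMass_mul_apply (hp : ∑ x, p x = 1) (f : X → ℝ) (i : ι) :
    ∑ ω : ι → X, iidMass p ω * f (ω i) = ∑ x, p x * f x := by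
  simpa [mul_ite, sum_ite_irrel, hp] using
    sum_iidMass_mul_prod p fun k x => if k = i then f x else 1

theorem sum_iidMass_mul_apply_mul_apply (hp : ∑ x, p x = 1) (f g : X → ℝ) {i j : ι}
    (hij : i ≠ j) :
    ∑ ω : ι → X, iidMass p ω * (f (ω i) * g (ω j)) = (∑ x, p x * f x) * ∑ x, p x * g x := by
  have factor (k : ι) :
      ∑ x, p x * ((if k = i then f x else 1) * if k = j then g x else 1) =
        (if k = i then ∑ x, p x * f x else 1) * if k = j then ∑ x, p x * g x else 1 := by
    split_ifs with hi hj <;> simp_all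
  simpa only [factor, prod_mul_distrib, prod_ite_eq', mem_univ, if_true] using
    sum_iidMass_mul_prod p fun k x => (if k = i then f x else 1) * if k = j then g x else 1

theorem sum_iidMass_mul_sum_sq (hp : ∑ x, p x = 1) {f : X → ℝ} (hf : ∑ x, p x * f x = 0) :
    ∑ ω : ι → X, iidMass p ω * (∑ j, f (ω j)) ^ 2 = Fintype.card ι * ∑ x, p x * f x ^ 2 := by
  have covariance (i j : ι) : ∑ ω : ι → X, iidMass p ω * (f (ω i) * f (ω j)) =
      if i = j then ∑ x, p x * f x ^ 2 else 0 := by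
    split_ifs with hij
    · subst hij
      simpa only [← sq] using sum_iidMass_mul_apply hp (fun x => f x ^ 2) i
    · rw [sum_iidMass_mul_apply_mul_apply hp f f hij, hf, zero_mul]
  calc ∑ ω : ι → X, iidMass p ω * (∑ j, f (ω j)) ^ 2
      = ∑ i, ∑ j, ∑ ω : ι → X, iidMass p ω * (f (ω i) * f (ω j)) := by
        simp only [sq, sum_mul_sum]
        simp only [mul_sum]
        rw [sum_comm]
        exact sum_congr rfl fun i _ => sum_comm
    _ = Fintype.card ι * ∑ x, p x * f x ^ 2 := by
        simp only [covariance, sum_ite_eq, mem_univ, if_true, sum_const, card_univ, nsmul_eq_mul]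

end IID

section Empirical

variable {ι X : Type*} [Fintype ι] [DecidableEq ι] [Nonempty ι]
  [Fintype X] [DecidableEq X] {p : X → ℝ}

theorem sum_iidMass_mul_sub_empiricalMass_sq (hp : ∑ x, p x = 1) (x : X) :
    ∑ ω : ι → X, iidMass p ω * (p x - empiricalMass ω x) ^ 2 =
      p x * (1 - p x) / Fintype.card ι := by
  let f : X → ℝ := fun y => (if y = x then 1 else 0) - p x
  have mean_f : ∑ y, p y * f y = 0 := by
    simp [f, mul_sub, sum_sub_distrib, ← sum_mul, hp]
  have variance_f : ∑ y, p y * f y ^ 2 = p x * (1 - p x) := by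
    have expand (y : X) :
        p y * f y ^ 2 = (if y = x then p y * (1 - 2 * p x) else 0) + p y * p x ^ 2 := by
      simp only [f]
      split_ifs <;> ring
    simp only [expand, sum_add_distrib, ← sum_mul, hp, sum_ite_eq', mem_univ, if_true]
    ring
  have deviation (ω : ι → X) :
      (p x - empiricalMass ω x) ^ 2 = (∑ j, f (ω j)) ^ 2 / (Fintype.card ι : ℝ) ^ 2 := by
    have sum_f : ∑ j, f (ω j) = #{j | ω j = x} - Fintype.card ι * p x := by
      simp [f, sum_sub_distrib]
    rw [sum_f, empiricalMass]
    field_simp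
    ring
  simp only [deviation, ← mul_div_assoc, ← sum_div]
  rw [sum_iidMass_mul_sum_sq hp mean_f, variance_f]
  field_simp

theorem sum_iidMass_mul_abs_sub_empiricalMass_le (hp : p ∈ stdSimplex ℝ X) (x : X) :
    ∑ ω : ι → X, iidMass p ω * |p x - empiricalMass ω x| ≤ √(p x / Fintype.card ι) := by
  have weights_mem := iidMass_mem_stdSimplex (ι := ι) hp
  apply Real.le_sqrt_of_sq_le
  calc (∑ ω : ι → X, iidMass p ω * |p x - empiricalMass ω x|) ^ 2
      ≤ ∑ ω : ι → X, iidMass p ω * |p x - empiricalMass ω x| ^ 2 :=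
        Real.pow_arith_mean_le_arith_mean_pow _ _ _ (fun ω _ => weights_mem.1 ω)
          weights_mem.2 (fun _ _ => abs_nonneg _) 2
    _ = p x * (1 - p x) / Fintype.card ι := by
        simp only [sq_abs, sum_iidMass_mul_sub_empiricalMass_sq hp.2]
    _ ≤ p x / Fintype.card ι := by
        gcongr
        exact mul_le_of_le_one_right (hp.1 x) (sub_le_self 1 (hp.1 x))

theorem sum_iidMass_mul_two_mul_dTV_empiricalMass_le (hp : p ∈ stdSimplex ℝ X) :
    ∑ ω : ι → X, iidMass p ω * (2 * dTV p (empiricalMass ω)) ≤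
      √(Fintype.card X / Fintype.card ι) := by
  calc ∑ ω : ι → X, iidMass p ω * (2 * dTV p (empiricalMass ω))
      = ∑ x, ∑ ω : ι → X, iidMass p ω * |p x - empiricalMass ω x| := by
        rw [sum_comm]
        simp only [dTV, ← mul_sum]
        ring_nf
    _ ≤ ∑ x, √(p x / Fintype.card ι) :=
        sum_le_sum fun x _ => sum_iidMass_mul_abs_sub_empiricalMass_le hp x
    _ ≤ √(Fintype.card X / Fintype.card ι) := by
        apply Real.le_sqrt_of_sq_le
        have cauchy_schwarz := sq_sum_le_card_mul_sum_sq (s := (univ : Finset X))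
          (f := fun x => √(p x / Fintype.card ι))
        simpa only [Real.sq_sqrt (div_nonneg (hp.1 _) (Nat.cast_nonneg _)), ← sum_div, hp.2,
          card_univ, mul_one_div] using cauchy_schwarz

end Empirical

section EmpiricalConditional

variable {ι : Type*} [Fintype ι] [DecidableEq S] [DecidableEq A]

theorem sum_card_filter_eq_prodMk [Fintype A] (ω : ι → S × A) (s : S) :
    ∑ a, #{j | ω j = (s, a)} = #{j | (ω j).1 = s} := by
  simp only [card_filter, Prod.ext_iff, ite_and]
  rw [sum_comm]
  simp only [sum_ite_irrel, sum_ite_eq, mem_univ, if_true, sum_const_zero]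

theorem empiricalConditional_mem_stdSimplex [Fintype A] {κ₀ : S → A → ℝ}
    (hκ₀ : ∀ s, κ₀ s ∈ stdSimplex ℝ A) (ω : ι → S × A) (s : S) :
    empiricalConditional κ₀ ω s ∈ stdSimplex ℝ A := by
  by_cases hs : 0 < #{j | (ω j).1 = s}
  · simp only [stdSimplex, Set.mem_ofPred_eq, empiricalConditional, if_pos hs]
    refine ⟨fun a => by positivity, ?_⟩
    rw [← sum_div, ← Nat.cast_sum, sum_card_filter_eq_prodMk]
    exact div_self (by exact_mod_cast hs.ne')
  · simpa only [stdSimplex, Set.mem_ofPred_eq, empiricalConditional, if_neg hs] using hκ₀ s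

theorem jointMass_empiricalMass_empiricalConditional (κ₀ : S → A → ℝ) (ω : ι → S × A) :
    jointMass (empiricalMass fun j => (ω j).1) (empiricalConditional κ₀ ω) = empiricalMass ω := by
  ext ⟨s, a⟩
  simp only [jointMass, empiricalMass, empiricalConditional]
  split_ifs with hs
  · field_simp
  · have marginal_zero : #{j | (ω j).1 = s} = 0 := Nat.eq_zero_of_not_pos hs
    have joint_zero : #{j | ω j = (s, a)} = 0 := by
      refine Nat.eq_zero_of_le_zero (marginal_zero ▸ card_le_card ?_)
      exact monotone_filter_right _ fun j _ hj => congrArg Prod.fst hj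
    simp only [marginal_zero, joint_zero, Nat.cast_zero, zero_div, zero_mul]

end EmpiricalConditional

/-- `hκ_joint` constrains `κ ω` only at the states observed in `ω`; at the others the default may
depend on the whole sample. -/
theorem expected_conditional_tv_error_of_empirical_conditionals_general
    {ι : Type*} [Fintype ι] [DecidableEq ι] [Nonempty ι]
    [Fintype S] [Fintype A] [DecidableEq S] [DecidableEq A]
    {ρ : S → ℝ} (hρ : ρ ∈ stdSimplex ℝ S)
    {π : S → A → ℝ} (hπ : ∀ s, π s ∈ stdSimplex ℝ A)
    {κ : (ι → S × A) → S → A → ℝ} (hκ : ∀ ω s, κ ω s ∈ stdSimplex ℝ A)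
    (hκ_joint : ∀ ω, jointMass (empiricalMass fun j => (ω j).1) (κ ω) = empiricalMass ω) :
    ∑ ω : ι → S × A, iidMass (jointMass ρ π) ω * ∑ s, ρ s * dTV (π s) (κ ω s) ≤
      √((Fintype.card S * Fintype.card A : ℝ) / Fintype.card ι) := by
  have hp := jointMass_mem_stdSimplex hρ hπ
  calc ∑ ω : ι → S × A, iidMass (jointMass ρ π) ω * ∑ s, ρ s * dTV (π s) (κ ω s)
      ≤ ∑ ω : ι → S × A, iidMass (jointMass ρ π) ω *
          (2 * dTV (jointMass ρ π) (empiricalMass ω)) := by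
        refine sum_le_sum fun ω _ => mul_le_mul_of_nonneg_left ?_ ((iidMass_mem_stdSimplex hp).1 ω)
        rw [← hκ_joint ω]
        exact sum_mul_dTV_le_two_mul_dTV_jointMass hρ.1 (fun s => (hπ s).2) (hκ ω) _
    _ ≤ √((Fintype.card S * Fintype.card A : ℝ) / Fintype.card ι) := by
        simpa only [Fintype.card_prod, Nat.cast_mul] using
          sum_iidMass_mul_two_mul_dTV_empiricalMass_le (ι := ι) hp

theorem expected_conditional_tv_error_of_empirical_conditionals
    [Fintype S] [Fintype A] [Nonempty S] [Nonempty A] [DecidableEq S] [DecidableEq A]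
    (n : ℕ) (hn : 0 < n)
    (ρ : S → ℝ) (hρ0 : ∀ s, 0 ≤ ρ s) (hρ1 : ∑ s : S, ρ s = 1)
    (π : S → A → ℝ) (hπ0 : ∀ s a, 0 ≤ π s a) (hπ1 : ∀ s, ∑ a : A, π s a = 1)
    (π₀ : S → A → ℝ) (hπ₀0 : ∀ s a, 0 ≤ π₀ s a) (hπ₀1 : ∀ s, ∑ a : A, π₀ s a = 1) :
    ∑ ω : Fin n → S × A, (∏ j : Fin n, ρ (ω j).1 * π (ω j).1 (ω j).2) *
        ∑ s : S, ρ s * dTV (π s) (fun a =>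
          if 0 < (univ.filter fun j : Fin n => (ω j).1 = s).card then
            ((univ.filter fun j : Fin n => ω j = (s, a)).card : ℝ) /
              ((univ.filter fun j : Fin n => (ω j).1 = s).card : ℝ)
          else π₀ s a) ≤
      Real.sqrt ((Fintype.card S * Fintype.card A : ℝ) / n) := by
  have : Nonempty (Fin n) := Fin.pos_iff_nonempty.mp hn
  refine (expected_conditional_tv_error_of_empirical_conditionals_general (ι := Fin n)
    ⟨hρ0, hρ1⟩ (fun s => ⟨hπ0 s, hπ1 s⟩)
    (empiricalConditional_mem_stdSimplex fun s => ⟨hπ₀0 s, hπ₀1 s⟩)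
    (jointMass_empiricalMass_empiricalConditional π₀)).trans_eq ?_
  rw [Fintype.card_fin]
end
end
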